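/- Let i ≥ 2 and j ≥ 1 be integers. Let X, Y be independent random variables with X ∼ χ²_{2i} and Y ∼ χ²_{2j}, and let X', Y' be independent with X' ∼ χ²_4 and Y' ∼ χ²_{2j}. Then E[ln(XY/(X+Y))] ≥ E[ln(X'Y'/(X'+Y'))]; explicitly, ∫_0^∞ ∫_0^∞ ln(xy/(x+y)) ρ_i(x) ρ_j(y) dx dy ≥ ∫_0^∞ ∫_0^∞ ln(xy/(x+y)) ρ_2(x) ρ_j(y) dx dy. -/

import Mathlib

open MeasureTheory Finset

/-- Density of the chi-squared distribution with `2m` degrees of freedom: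
`ρ_m(q) = q^{m−1} e^{−q/2} / (2^m (m−1)!)` on `(0,∞)`. -/
noncomputable def chi2Density (m : ℕ) (q : ℝ) : ℝ :=
  q ^ (m - 1) * Real.exp (-q / 2) / (2 ^ m * Nat.factorial (m - 1))

/-
The parallel sum `xy/(x+y)` increases with `x`, hence so does `x ↦ E[ln(xY/(x+Y))]`. On the other
hand `ρ_{m+1}(x) = x/(2m) · ρ_m(x)`, so passing from `ρ_m` to `ρ_{m+1}` moves mass from the left of
`2m` to its right, which can only increase the integral of an increasing function. All integrals
converge because `xy/(x+y)` lies between `min(x,y)/2` and `min(x,y)`, so that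
`|ln(xy/(x+y))| ≤ ln 2 + |ln x| + |ln y|`.
-/

section SingleCrossing

variable {α : Type*} [LinearOrder α] [MeasurableSpace α] {μ : Measure α} {s : Set α}

theorem setIntegral_mul_le_of_single_crossing {f p q : α → ℝ} {c : α} (hs : MeasurableSet s)
    (hc : c ∈ s) (hf : MonotoneOn f s) (hp : IntegrableOn p s μ) (hq : IntegrableOn q s μ)
    (hfp : IntegrableOn (fun x ↦ f x * p x) s μ) (hfq : IntegrableOn (fun x ↦ f x * q x) s μ)
    (hmass : ∫ x in s, p x ∂μ = ∫ x in s, q x ∂μ)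
    (hleft : ∀ x ∈ s, x ≤ c → q x ≤ p x) (hright : ∀ x ∈ s, c ≤ x → p x ≤ q x) :
    ∫ x in s, f x * p x ∂μ ≤ ∫ x in s, f x * q x ∂μ := by
  have hcross : ∀ x ∈ s, f c * (q x - p x) ≤ f x * q x - f x * p x := by
    intro x hx
    rw [← mul_sub]
    rcases le_total x c with hxc | hcx
    · exact mul_le_mul_of_nonpos_right (hf hx hc hxc) (sub_nonpos.2 (hleft x hx hxc))
    · exact mul_le_mul_of_nonneg_right (hf hc hx hcx) (sub_nonneg.2 (hright x hx hcx))
  have hle : ∫ x in s, f c * (q x - p x) ∂μ ≤ ∫ x in s, (f x * q x - f x * p x) ∂μ :=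
    setIntegral_mono_on ((hq.sub hp).const_mul (f c)) (hfq.sub hfp) hs hcross
  rwa [integral_const_mul, integral_sub hq hp, hmass, sub_self, mul_zero, integral_sub hfq hfp,
    sub_nonneg] at hle

end SingleCrossing

section Log

theorem abs_log_le_rpow_add_rpow_neg_div {x ε : ℝ} (hx : 0 < x) (hε : 0 < ε) :
    |Real.log x| ≤ (x ^ ε + x ^ (-ε)) / ε := by
  have hlog : Real.log x ≤ x ^ ε / ε := Real.log_le_rpow_div hx.le hε
  have hlog_inv : -Real.log x ≤ x ^ (-ε) / ε := by
    simpa only [Real.log_inv, Real.inv_rpow hx.le, ← Real.rpow_neg hx.le] using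
      Real.log_le_rpow_div (inv_nonneg.2 hx.le) hε
  have hpos : 0 ≤ x ^ ε / ε := by positivity
  have hpos_inv : 0 ≤ x ^ (-ε) / ε := by positivity
  rw [add_div, abs_le]
  constructor <;> linarith

theorem half_min_le_mul_div_add {x y : ℝ} (hx : 0 < x) (hy : 0 < y) :
    min x y / 2 ≤ x * y / (x + y) := by
  rw [div_le_div_iff₀ two_pos (add_pos hx hy), ← min_mul_max x y, mul_assoc]
  gcongr
  linarith [le_max_left x y, le_max_right x y]

theorem mul_div_add_le_min {x y : ℝ} (hx : 0 < x) (hy : 0 < y) :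
    x * y / (x + y) ≤ min x y := by
  rw [div_le_iff₀ (add_pos hx hy), ← min_mul_max x y]
  gcongr
  exact max_le (by linarith) (by linarith)

theorem abs_log_mul_div_add_le {x y : ℝ} (hx : 0 < x) (hy : 0 < y) :
    |Real.log (x * y / (x + y))| ≤ Real.log 2 + |Real.log x| + |Real.log y| := by
  have hmin : 0 < min x y := lt_min hx hy
  have hupper : Real.log (x * y / (x + y)) ≤ Real.log (min x y) :=
    Real.log_le_log (by positivity) (mul_div_add_le_min hx hy)
  have hlower : Real.log (min x y) - Real.log 2 ≤ Real.log (x * y / (x + y)) := by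
    rw [← Real.log_div hmin.ne' two_ne_zero]
    exact Real.log_le_log (by positivity) (half_min_le_mul_div_add hx hy)
  have hlog_min : |Real.log (min x y)| ≤ |Real.log x| + |Real.log y| := by
    rcases min_choice x y with h | h <;> rw [h]
    exacts [le_add_of_nonneg_right (abs_nonneg _), le_add_of_nonneg_left (abs_nonneg _)]
  have hlog_two : 0 ≤ Real.log 2 := Real.log_nonneg one_le_two
  rw [abs_le] at hlog_min ⊢
  constructor <;> linarith

theorem log_mul_div_add_le_log_mul_div_add {x x' y : ℝ} (hx : 0 < x) (hxx' : x ≤ x')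
    (hy : 0 < y) : Real.log (x * y / (x + y)) ≤ Real.log (x' * y / (x' + y)) := by
  have hx' : 0 < x' := hx.trans_le hxx'
  refine Real.log_le_log (by positivity) ?_
  rw [div_le_div_iff₀ (by positivity) (by positivity)]
  linarith [mul_le_mul_of_nonneg_right hxx' (mul_pos hy hy).le]

end Log

section ParallelSum

/-- For a positive random variable `Y` with density `w`, the function `x ↦ E[ln(xY/(x+Y))]`, where
`xy/(x+y) = (x⁻¹ + y⁻¹)⁻¹` is the parallel sum of `x` and `y`, i.e. half their harmonic mean.
The total mass of `w` is not normalized. -/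
noncomputable def expectLogParallelSum (w : ℝ → ℝ) (x : ℝ) : ℝ :=
  ∫ y in Set.Ioi (0 : ℝ), Real.log (x * y / (x + y)) * w y

variable {p w : ℝ → ℝ}

theorem integral_log_mul_div_add_mul_mul (p w : ℝ → ℝ) (x : ℝ) :
    ∫ y in Set.Ioi (0 : ℝ), Real.log (x * y / (x + y)) * (p x * w y) =
      expectLogParallelSum w x * p x := by
  simp only [expectLogParallelSum, ← integral_mul_const, mul_assoc, mul_comm (p x)]

theorem integrableOn_log_mul_div_add_mul {x : ℝ} (hx : 0 < x)
    (hw : IntegrableOn w (Set.Ioi 0))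
    (hlogw : IntegrableOn (fun y ↦ Real.log y * w y) (Set.Ioi 0)) :
    IntegrableOn (fun y ↦ Real.log (x * y / (x + y)) * w y) (Set.Ioi 0) := by
  have hbound : IntegrableOn
      (fun y ↦ (Real.log 2 + |Real.log x|) * ‖w y‖ + ‖Real.log y * w y‖) (Set.Ioi 0) :=
    (hw.norm.const_mul _).add hlogw.norm
  refine hbound.mono' (Measurable.aestronglyMeasurable (by fun_prop) |>.mul
    hw.aestronglyMeasurable) ?_
  filter_upwards [ae_restrict_mem measurableSet_Ioi] with y hy
  simp only [norm_mul, Real.norm_eq_abs, ← add_mul]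
  gcongr
  exact abs_log_mul_div_add_le hx hy

theorem monotoneOn_expectLogParallelSum (hw_nonneg : ∀ y, 0 < y → 0 ≤ w y)
    (hw : IntegrableOn w (Set.Ioi 0))
    (hlogw : IntegrableOn (fun y ↦ Real.log y * w y) (Set.Ioi 0)) :
    MonotoneOn (expectLogParallelSum w) (Set.Ioi 0) := fun _ hx _ hx' hxx' ↦
  setIntegral_mono_on (integrableOn_log_mul_div_add_mul hx hw hlogw)
    (integrableOn_log_mul_div_add_mul hx' hw hlogw) measurableSet_Ioi fun y hy ↦
      mul_le_mul_of_nonneg_right (log_mul_div_add_le_log_mul_div_add hx hxx' hy) (hw_nonneg y hy)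

theorem integrable_prod_log_mul_div_add_mul_mul (hp : IntegrableOn p (Set.Ioi 0))
    (hlogp : IntegrableOn (fun x ↦ Real.log x * p x) (Set.Ioi 0))
    (hw : IntegrableOn w (Set.Ioi 0))
    (hlogw : IntegrableOn (fun y ↦ Real.log y * w y) (Set.Ioi 0)) :
    Integrable (fun z : ℝ × ℝ ↦ Real.log (z.1 * z.2 / (z.1 + z.2)) * (p z.1 * w z.2))
      ((volume.restrict (Set.Ioi 0)).prod (volume.restrict (Set.Ioi 0))) := by
  have hpw := hp.mul_prod hw
  have hbound := ((hpw.norm.const_mul (Real.log 2)).add (hlogp.mul_prod hw).norm).add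
    (hp.mul_prod hlogw).norm
  refine hbound.mono' (Measurable.aestronglyMeasurable (by fun_prop) |>.mul
    hpw.aestronglyMeasurable) ?_
  rw [Measure.prod_restrict]
  filter_upwards [ae_restrict_mem (measurableSet_Ioi.prod measurableSet_Ioi)] with ⟨x, y⟩ hxy
  simp only [Pi.add_apply, norm_mul, Real.norm_eq_abs]
  calc |Real.log (x * y / (x + y))| * (|p x| * |w y|)
      ≤ (Real.log 2 + |Real.log x| + |Real.log y|) * (|p x| * |w y|) := by
        gcongr
        exact abs_log_mul_div_add_le hxy.1 hxy.2
    _ = Real.log 2 * (|p x| * |w y|) + |Real.log x| * |p x| * |w y|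
          + |p x| * (|Real.log y| * |w y|) := by ring

theorem integrableOn_expectLogParallelSum_mul (hp : IntegrableOn p (Set.Ioi 0))
    (hlogp : IntegrableOn (fun x ↦ Real.log x * p x) (Set.Ioi 0))
    (hw : IntegrableOn w (Set.Ioi 0))
    (hlogw : IntegrableOn (fun y ↦ Real.log y * w y) (Set.Ioi 0)) :
    IntegrableOn (fun x ↦ expectLogParallelSum w x * p x) (Set.Ioi 0) :=
  (integrable_prod_log_mul_div_add_mul_mul hp hlogp hw hlogw).integral_prod_left.congr
    (.of_forall fun x ↦ integral_log_mul_div_add_mul_mul p w x)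

end ParallelSum

section ChiSquared

variable {m : ℕ}

theorem chi2Density_nonneg (m : ℕ) {x : ℝ} (hx : 0 ≤ x) : 0 ≤ chi2Density m x := by
  unfold chi2Density
  positivity

theorem chi2Density_succ (hm : 1 ≤ m) (x : ℝ) :
    chi2Density (m + 1) x = x / (2 * m) * chi2Density m x := by
  obtain ⟨k, rfl⟩ := Nat.exists_eq_add_of_le' hm
  simp only [chi2Density, Nat.add_sub_cancel, Nat.factorial_succ, Nat.cast_mul]
  field_simp
  ring

theorem chi2Density_eq_rpow_mul_exp (hm : 1 ≤ m) (x : ℝ) :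
    chi2Density m x =
      (2 ^ m * (m - 1).factorial : ℝ)⁻¹ * (x ^ ((m : ℝ) - 1) * Real.exp (-(1 / 2 * x))) := by
  rw [chi2Density, div_eq_inv_mul, ← Nat.cast_pred hm, Real.rpow_natCast, one_div_mul_eq_div,
    neg_div]

theorem integral_chi2Density (hm : 1 ≤ m) : ∫ x in Set.Ioi (0 : ℝ), chi2Density m x = 1 := by
  have hGamma : Real.Gamma m = (m - 1).factorial := by
    rw [← Real.Gamma_nat_eq_factorial, Nat.cast_pred hm, sub_add_cancel]
  simp only [chi2Density_eq_rpow_mul_exp hm, integral_const_mul]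
  rw [Real.integral_rpow_mul_exp_neg_mul_Ioi (Nat.cast_pos.2 hm) one_half_pos, hGamma,
    one_div_one_div, Real.rpow_natCast]
  exact inv_mul_cancel₀ (by positivity)

theorem integrableOn_rpow_mul_chi2Density (hm : 1 ≤ m) {r : ℝ} (hr : -m < r) :
    IntegrableOn (fun x ↦ x ^ r * chi2Density m x) (Set.Ioi 0) := by
  have hGamma : IntegrableOn
      (fun x : ℝ ↦ x ^ (r + ((m : ℝ) - 1)) * Real.exp (-(1 / 2) * x ^ (1 : ℝ))) (Set.Ioi 0) :=
    integrableOn_rpow_mul_exp_neg_mul_rpow (by linarith) one_pos one_half_pos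
  refine IntegrableOn.congr_fun (hGamma.const_mul (2 ^ m * (m - 1).factorial : ℝ)⁻¹)
    (fun x (hx : 0 < x) ↦ ?_) measurableSet_Ioi
  simp only [chi2Density_eq_rpow_mul_exp hm, Real.rpow_add hx, Real.rpow_one, neg_mul]
  ring

theorem integrableOn_chi2Density (hm : 1 ≤ m) : IntegrableOn (chi2Density m) (Set.Ioi 0) := by
  simpa only [Real.rpow_zero, one_mul] using
    integrableOn_rpow_mul_chi2Density hm (neg_lt_zero.2 (Nat.cast_pos.2 hm))

theorem integrableOn_log_mul_chi2Density (hm : 1 ≤ m) :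
    IntegrableOn (fun x ↦ Real.log x * chi2Density m x) (Set.Ioi 0) := by
  have hm' : (1 : ℝ) ≤ m := Nat.one_le_cast.2 hm
  have hbound := ((integrableOn_rpow_mul_chi2Density hm (r := 1 / 2) (by linarith)).add
    (integrableOn_rpow_mul_chi2Density hm (r := -(1 / 2)) (by linarith))).div_const (1 / 2)
  refine hbound.mono' (Real.measurable_log.aestronglyMeasurable.mul
    (integrableOn_chi2Density hm).aestronglyMeasurable) ?_
  filter_upwards [ae_restrict_mem measurableSet_Ioi] with x (hx : 0 < x)
  have hnonneg : 0 ≤ chi2Density m x := chi2Density_nonneg m hx.le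
  rw [norm_mul, Real.norm_eq_abs, Real.norm_of_nonneg hnonneg, Pi.add_apply, ← add_mul,
    mul_div_right_comm]
  gcongr
  exact abs_log_le_rpow_add_rpow_neg_div hx one_half_pos

theorem setIntegral_mul_chi2Density_le_succ {f : ℝ → ℝ} (hm : 1 ≤ m)
    (hf : MonotoneOn f (Set.Ioi 0))
    (hint : IntegrableOn (fun x ↦ f x * chi2Density m x) (Set.Ioi 0))
    (hint_succ : IntegrableOn (fun x ↦ f x * chi2Density (m + 1) x) (Set.Ioi 0)) :
    ∫ x in Set.Ioi 0, f x * chi2Density m x ≤ ∫ x in Set.Ioi 0, f x * chi2Density (m + 1) x := by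
  have hm_succ : 1 ≤ m + 1 := Nat.le_add_left 1 m
  have hcross : (0 : ℝ) < 2 * m := by positivity
  refine setIntegral_mul_le_of_single_crossing (c := 2 * m) measurableSet_Ioi hcross hf
    (integrableOn_chi2Density hm) (integrableOn_chi2Density hm_succ) hint hint_succ
    (by rw [integral_chi2Density hm, integral_chi2Density hm_succ])
    (fun x (hx : 0 < x) hle ↦ ?_) (fun x (hx : 0 < x) hle ↦ ?_) <;>
    rw [chi2Density_succ hm]
  · exact mul_le_of_le_one_left (chi2Density_nonneg m hx.le) ((div_le_one hcross).2 hle)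
  · exact le_mul_of_one_le_left (chi2Density_nonneg m hx.le) ((one_le_div hcross).2 hle)

theorem monotoneOn_setIntegral_mul_chi2Density {f : ℝ → ℝ} (hf : MonotoneOn f (Set.Ioi 0))
    (hint : ∀ m, 1 ≤ m → IntegrableOn (fun x ↦ f x * chi2Density m x) (Set.Ioi 0)) :
    MonotoneOn (fun m ↦ ∫ x in Set.Ioi 0, f x * chi2Density m x) (Set.Ici 1) :=
  monotoneOn_nat_Ici_of_le_succ fun m hm ↦
    setIntegral_mul_chi2Density_le_succ hm hf (hint m hm) (hint (m + 1) (Nat.le_add_left 1 m))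

end ChiSquared

theorem expectation_log_harmonicmean_monotone_general {k i : ℕ} {w : ℝ → ℝ} (hk : 1 ≤ k)
    (hki : k ≤ i) (hw_nonneg : ∀ y, 0 < y → 0 ≤ w y) (hw : IntegrableOn w (Set.Ioi 0))
    (hlogw : IntegrableOn (fun y ↦ Real.log y * w y) (Set.Ioi 0)) :
    (∫ x in Set.Ioi (0 : ℝ), ∫ y in Set.Ioi (0 : ℝ),
        Real.log (x * y / (x + y)) * (chi2Density i x * w y)) ≥
    (∫ x in Set.Ioi (0 : ℝ), ∫ y in Set.Ioi (0 : ℝ),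
        Real.log (x * y / (x + y)) * (chi2Density k x * w y)) := by
  simp only [integral_log_mul_div_add_mul_mul]
  exact monotoneOn_setIntegral_mul_chi2Density
    (monotoneOn_expectLogParallelSum hw_nonneg hw hlogw)
    (fun m hm ↦ integrableOn_expectLogParallelSum_mul (integrableOn_chi2Density hm)
      (integrableOn_log_mul_chi2Density hm) hw hlogw)
    hk (hk.trans hki) hki

theorem expectation_log_harmonicmean_monotone (i j : ℕ) (hi : 2 ≤ i) (hj : 1 ≤ j) :
    (∫ x in Set.Ioi (0 : ℝ), ∫ y in Set.Ioi (0 : ℝ),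
        Real.log (x * y / (x + y)) * (chi2Density i x * chi2Density j y)) ≥
    (∫ x in Set.Ioi (0 : ℝ), ∫ y in Set.Ioi (0 : ℝ),
        Real.log (x * y / (x + y)) * (chi2Density 2 x * chi2Density j y)) :=
  expectation_log_harmonicmean_monotone_general one_le_two hi
    (fun _ hy ↦ chi2Density_nonneg j hy.le) (integrableOn_chi2Density hj)
    (integrableOn_log_mul_chi2Density hj)
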